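/- arXiv:1406.6266 — 7 statements merged into one kernel-verified Lean document; each statement's English description precedes it below -/
import Mathlib

section
/- Let k ∈ ℕ and let K, K' be Kripke models over Φ with teams T, T' such that K,T ⇌ₖ K',T'. Then for all T₁,T₂ ⊆ T with T = T₁ ∪ T₂ there exist T'₁,T'₂ ⊆ T' such that T' = T'₁ ∪ T'₂ and K,Tᵢ ⇌ₖ K',T'ᵢ for i ∈ {1,2}. -/
namespace MDLTeam

/-- A Kripke model over a set `Φ` of proposition symbols: a set `W` of worlds,
an accessibility relation `R` and a valuation `V`.  A team of `K` is a subset of `K.W`. -/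
structure Kripke (Φ : Type) : Type 1 where
  W : Type
  R : W → W → Prop
  V : Φ → Set W

namespace Kripke

variable {Φ : Type}

/-- `R[T] = {v | ∃ w ∈ T, w R v}` -/
def img (K : Kripke Φ) (T : Set K.W) : Set K.W := {v | ∃ w ∈ T, K.R w v}

/-- `R⁻¹[S] = {w | ∃ v ∈ S, w R v}` -/
def pre (K : Kripke Φ) (S : Set K.W) : Set K.W := {w | ∃ v ∈ S, K.R w v}

/-- `T[R]S` iff `S ⊆ R[T]` and `T ⊆ R⁻¹[S]`. -/
def trs (K : Kripke Φ) (T S : Set K.W) : Prop := S ⊆ K.img T ∧ T ⊆ K.pre S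

end Kripke

/-- Formulas of modal logic `ML(Φ)` in negation normal form. -/
inductive MLFrm (Φ : Type) : Type
  | atom (p : Φ)
  | natom (p : Φ)
  | and (φ ψ : MLFrm Φ)
  | or (φ ψ : MLFrm Φ)
  | dia (φ : MLFrm Φ)
  | box (φ : MLFrm Φ)
  deriving DecidableEq

namespace MLFrm

variable {Φ : Type}

/-- Team semantics for `ML`. -/
def sat (K : Kripke Φ) : MLFrm Φ → Set K.W → Prop
  | atom p, T => T ⊆ K.V p
  | natom p, T => T ∩ K.V p = ∅
  | and φ ψ, T => sat K φ T ∧ sat K ψ T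
  | or φ ψ, T => ∃ T₁ T₂, T = T₁ ∪ T₂ ∧ sat K φ T₁ ∧ sat K ψ T₂
  | dia φ, T => ∃ S, K.trs T S ∧ sat K φ S
  | box φ, T => sat K φ (K.img T)

/-- Standard (pointwise) Kripke semantics for `ML`. -/
def psat (K : Kripke Φ) : MLFrm Φ → K.W → Prop
  | atom p, w => w ∈ K.V p
  | natom p, w => w ∉ K.V p
  | and φ ψ, w => psat K φ w ∧ psat K ψ w
  | or φ ψ, w => psat K φ w ∨ psat K ψ w
  | dia φ, w => ∃ v, K.R w v ∧ psat K φ v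
  | box φ, w => ∀ v, K.R w v → psat K φ v

/-- Modal depth. -/
def md : MLFrm Φ → ℕ
  | atom _ => 0
  | natom _ => 0
  | and φ ψ => max (md φ) (md ψ)
  | or φ ψ => max (md φ) (md ψ)
  | dia φ => md φ + 1
  | box φ => md φ + 1

end MLFrm

/-- Formulas of `ML(⊻)(Φ)`: modal logic with intuitionistic disjunction. -/
inductive MLI (Φ : Type) : Type
  | atom (p : Φ)
  | natom (p : Φ)
  | and (φ ψ : MLI Φ)
  | or (φ ψ : MLI Φ)
  | dia (φ : MLI Φ)
  | box (φ : MLI Φ)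
  | idis (φ ψ : MLI Φ)
  deriving DecidableEq

namespace MLI

variable {Φ : Type}

/-- Team semantics for `ML(⊻)`. -/
def sat (K : Kripke Φ) : MLI Φ → Set K.W → Prop
  | atom p, T => T ⊆ K.V p
  | natom p, T => T ∩ K.V p = ∅
  | and φ ψ, T => sat K φ T ∧ sat K ψ T
  | or φ ψ, T => ∃ T₁ T₂, T = T₁ ∪ T₂ ∧ sat K φ T₁ ∧ sat K ψ T₂
  | dia φ, T => ∃ S, K.trs T S ∧ sat K φ S
  | box φ, T => sat K φ (K.img T)
  | idis φ ψ, T => sat K φ T ∨ sat K ψ T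

/-- Modal depth. -/
def md : MLI Φ → ℕ
  | atom _ => 0
  | natom _ => 0
  | and φ ψ => max (md φ) (md ψ)
  | or φ ψ => max (md φ) (md ψ)
  | dia φ => md φ + 1
  | box φ => md φ + 1
  | idis φ ψ => max (md φ) (md ψ)

/-- The number of occurrences of the connective `⊻` in a formula. -/
def occIdis : MLI Φ → ℕ
  | atom _ => 0
  | natom _ => 0
  | and φ ψ => occIdis φ + occIdis ψ
  | or φ ψ => occIdis φ + occIdis ψ
  | dia φ => occIdis φ
  | box φ => occIdis φ
  | idis φ ψ => occIdis φ + occIdis ψ + 1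

/-- The number of symbols in a formula. -/
def size : MLI Φ → ℕ
  | atom _ => 1
  | natom _ => 2
  | and φ ψ => size φ + size ψ + 1
  | or φ ψ => size φ + size ψ + 1
  | dia φ => size φ + 1
  | box φ => size φ + 1
  | idis φ ψ => size φ + size ψ + 1

end MLI

/-- Formulas of extended modal dependence logic `EMDL(Φ)`: `ML` extended by
dependence atoms `dep(ψ₁,…,ψₙ,θ)` with `ψ₁,…,ψₙ,θ ∈ ML(Φ)`. -/
inductive EMDL (Φ : Type) : Type
  | atom (p : Φ)
  | natom (p : Φ)
  | and (φ ψ : EMDL Φ)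
  | or (φ ψ : EMDL Φ)
  | dia (φ : EMDL Φ)
  | box (φ : EMDL Φ)
  | dep (l : List (MLFrm Φ)) (θ : MLFrm Φ)

namespace EMDL

variable {Φ : Type}

/-- Team semantics for `EMDL`. -/
def sat (K : Kripke Φ) : EMDL Φ → Set K.W → Prop
  | atom p, T => T ⊆ K.V p
  | natom p, T => T ∩ K.V p = ∅
  | and φ ψ, T => sat K φ T ∧ sat K ψ T
  | or φ ψ, T => ∃ T₁ T₂, T = T₁ ∪ T₂ ∧ sat K φ T₁ ∧ sat K ψ T₂
  | dia φ, T => ∃ S, K.trs T S ∧ sat K φ S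
  | box φ, T => sat K φ (K.img T)
  | dep l θ, T => ∀ w ∈ T, ∀ v ∈ T,
      (∀ ψ ∈ l, (MLFrm.sat K ψ {w} ↔ MLFrm.sat K ψ {v})) →
      (MLFrm.sat K θ {w} ↔ MLFrm.sat K θ {v})

end EMDL

/-- `k`-bisimilarity of pointed models. -/
def bisim {Φ : Type} (K K' : Kripke Φ) : ℕ → K.W → K'.W → Prop
  | 0, w, w' => ∀ p, w ∈ K.V p ↔ w' ∈ K'.V p
  | k + 1, w, w' =>
      (∀ p, w ∈ K.V p ↔ w' ∈ K'.V p) ∧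
      (∀ v, K.R w v → ∃ v', K'.R w' v' ∧ bisim K K' k v v') ∧
      (∀ v', K'.R w' v' → ∃ v, K.R w v ∧ bisim K K' k v v')

/-- Team `k`-bisimilarity: `K,T ⇌ₖ K',T'`. -/
def tbisim {Φ : Type} (K K' : Kripke Φ) (k : ℕ) (T : Set K.W) (T' : Set K'.W) : Prop :=
  (∀ w ∈ T, ∃ w' ∈ T', bisim K K' k w w') ∧
  (∀ w' ∈ T', ∃ w ∈ T, bisim K K' k w w')

/-- `M(φ,K)`: the set of maximal teams satisfying `φ` in `K` (for `ML(⊻)`). -/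
def MLI.Mset {Φ : Type} (K : Kripke Φ) (φ : MLI Φ) : Set (Set K.W) :=
  {T | MLI.sat K φ T ∧ ∀ S, MLI.sat K φ S → T ⊆ S → S = T}

/-- `N(φ,K)`: the family of minimal teams not satisfying `φ` in `K` (for `ML(⊻)`). -/
def MLI.Nset {Φ : Type} (K : Kripke Φ) (φ : MLI Φ) : Set (Set K.W) :=
  {T | ¬ MLI.sat K φ T ∧ ∀ S, ¬ MLI.sat K φ S → S ⊆ T → S = T}

/-- The upper dimension `Dim(φ)` of an `ML(⊻)`-formula: the least `m` such that
`|M(φ,K)| ≤ m` for every Kripke model `K` over `Φ`. -/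
noncomputable def MLI.Dim {Φ : Type} (φ : MLI Φ) : ℕ :=
  sInf {m : ℕ | ∀ K : Kripke Φ, (MLI.Mset K φ).Finite ∧ (MLI.Mset K φ).ncard ≤ m}

/-- The lower dimension `dim(φ)` of an `ML(⊻)`-formula: the least `n` such that
`|T| ≤ n` for every Kripke model `K` over `Φ` and every `T ∈ N(φ,K)`. -/
noncomputable def MLI.ldim {Φ : Type} (φ : MLI Φ) : ℕ :=
  sInf {n : ℕ | ∀ K : Kripke Φ, ∀ T ∈ MLI.Nset K φ, T.Finite ∧ T.ncard ≤ n}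

/-- `M(φ,K)`: the set of maximal teams satisfying `φ` in `K` (for `EMDL`). -/
def EMDL.Mset {Φ : Type} (K : Kripke Φ) (φ : EMDL Φ) : Set (Set K.W) :=
  {T | EMDL.sat K φ T ∧ ∀ S, EMDL.sat K φ S → T ⊆ S → S = T}

/-- The upper dimension `Dim(φ)` of an `EMDL`-formula. -/
noncomputable def EMDL.Dim {Φ : Type} (φ : EMDL Φ) : ℕ :=
  sInf {m : ℕ | ∀ K : Kripke Φ, (EMDL.Mset K φ).Finite ∧ (EMDL.Mset K φ).ncard ≤ m}

/-- The `Ψ`-type of a state: `type_Ψ(K,w) = {ψ ∈ Ψ | K,w ⊨ ψ}`. -/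
def typeSet {Φ : Type} (K : Kripke Φ) (Ψ : Set (MLFrm Φ)) (w : K.W) : Set (MLFrm Φ) :=
  {ψ | ψ ∈ Ψ ∧ MLFrm.psat K ψ w}

/-- `tset_Ψ(K,T) = {type_Ψ(K,w) | w ∈ T}`. -/
def tset {Φ : Type} (K : Kripke Φ) (Ψ : Set (MLFrm Φ)) (T : Set K.W) : Set (Set (MLFrm Φ)) :=
  typeSet K Ψ '' T

section EgliMilner

variable {α β : Type*} {R : SetRel α β} {s s₁ : Set α} {t : Set β}

/-- The Egli–Milner lifting of a relation to sets: every element of `s` is related to an element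
of `t`, and conversely. Team `k`-bisimilarity is the lifting of `k`-bisimilarity. -/
def EgliMilner (R : SetRel α β) (s : Set α) (t : Set β) : Prop :=
  s ⊆ R.preimage t ∧ t ⊆ R.image s

theorem EgliMilner.inter_image_of_subset (h : EgliMilner R s t) (hs : s₁ ⊆ s) :
    EgliMilner R s₁ (t ∩ R.image s₁) := by
  refine ⟨fun a ha ↦ ?_, Set.inter_subset_right⟩
  obtain ⟨b, hb, hab⟩ := h.1 (hs ha)
  exact ⟨b, ⟨hb, a, ha, hab⟩, hab⟩

theorem tbisim_split_general {ι : Sort*} {s : ι → Set α} (h : EgliMilner R (⋃ i, s i) t) :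
    ∃ t' : ι → Set β, ⋃ i, t' i = t ∧ ∀ i, EgliMilner R (s i) (t' i) := by
  refine ⟨fun i ↦ t ∩ R.image (s i), ?_, fun i ↦ h.inter_image_of_subset (Set.subset_iUnion s i)⟩
  calc ⋃ i, t ∩ R.image (s i)
    _ = t ∩ R.image (⋃ i, s i) := by rw [SetRel.image_iUnion, Set.inter_iUnion]
    _ = t := Set.inter_eq_left.2 h.2

end EgliMilner

theorem tbisim_iff_egliMilner {Φ : Type} {K K' : Kripke Φ} {k : ℕ} {T : Set K.W}
    {T' : Set K'.W} :
    tbisim K K' k T T' ↔ EgliMilner {p | bisim K K' k p.1 p.2} T T' :=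
  Iff.rfl

/-- If `K,T ⇌ₖ K',T'`, then every splitting `T = T₁ ∪ T₂` of `T` can be matched
by a splitting `T' = T'₁ ∪ T'₂` of `T'` with `K,Tᵢ ⇌ₖ K',T'ᵢ` for `i ∈ {1,2}`. -/
theorem tbisim_split {Φ : Type} (k : ℕ) (K K' : Kripke Φ)
    (T : Set K.W) (T' : Set K'.W) (h : tbisim K K' k T T') :
    ∀ T₁ T₂ : Set K.W, T₁ ⊆ T → T₂ ⊆ T → T = T₁ ∪ T₂ →
      ∃ T₁' T₂' : Set K'.W, T₁' ⊆ T' ∧ T₂' ⊆ T' ∧ T' = T₁' ∪ T₂' ∧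
        tbisim K K' k T₁ T₁' ∧ tbisim K K' k T₂ T₂' := by
  rintro T₁ T₂ - - rfl
  rw [tbisim_iff_egliMilner, Set.union_eq_iUnion] at h
  obtain ⟨S, rfl, hS⟩ := tbisim_split_general h
  exact ⟨S true, S false, Set.subset_iUnion S true, Set.subset_iUnion S false, iSup_bool_eq,
    hS true, hS false⟩

end MDLTeam
end

section
/- For every formula φ of ML(⊻)(Φ), the class ‖φ‖ is closed under team md(φ)-bisimulation: if K,T ⊨ φ and K,T ⇌_{md(φ)} K',T', then K',T' ⊨ φ. -/
namespace MDLTeam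

/-!
The induction on `φ` is one-sided: `φ` passes from `T` to every team `T'` contained in the image of
`T` under `md(φ)`-bisimilarity. Containment is inherited by subteams, so the parts of a split of
`T'`, or a successor team of `T'` witnessing `◇`, are obtained by intersecting with the images of
the corresponding teams of `K`.
-/

section BisimRel

variable {Φ : Type} {K K' : Kripke Φ} {k l : ℕ}

theorem bisim.mem_V_iff {w : K.W} {w' : K'.W} (h : bisim K K' k w w') (p : Φ) :
    w ∈ K.V p ↔ w' ∈ K'.V p := by
  cases k with
  | zero => exact h p
  | succ k => exact h.1 p

theorem bisim.of_succ {w : K.W} {w' : K'.W} (h : bisim K K' (k + 1) w w') :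
    bisim K K' k w w' := by
  induction k generalizing w w' with
  | zero => exact h.1
  | succ k ih =>
    obtain ⟨atoms, forth, back⟩ := h
    refine ⟨atoms, fun v hwv => ?_, fun v' hwv' => ?_⟩
    · obtain ⟨v', hwv', hvv'⟩ := forth v hwv
      exact ⟨v', hwv', ih hvv'⟩
    · obtain ⟨v, hwv, hvv'⟩ := back v' hwv'
      exact ⟨v, hwv, ih hvv'⟩

/-- The relation `⇌ᵏ` between the states of `K` and those of `K'`, as a `SetRel`, so that
`(bisimRel K K' k).image T` is the team of all states of `K'` that are `k`-bisimilar to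
some state of `T`. -/
def bisimRel (K K' : Kripke Φ) (k : ℕ) : SetRel K.W K'.W :=
  {x | bisim K K' k x.1 x.2}

theorem bisimRel_antitone (K K' : Kripke Φ) : Antitone (bisimRel K K') :=
  antitone_nat_of_succ_le fun _ _ => bisim.of_succ

theorem bisimRel_image_anti (hkl : k ≤ l) (T : Set K.W) :
    (bisimRel K K' l).image T ⊆ (bisimRel K K' k).image T :=
  SetRel.image_subset_image_left (bisimRel_antitone K K' hkl)

theorem bisimRel_image_V_subset (p : Φ) : (bisimRel K K' k).image (K.V p) ⊆ K'.V p := by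
  rintro w' ⟨w, hw, hww'⟩
  exact (hww'.mem_V_iff p).1 hw

theorem bisimRel_image_compl_V_subset (p : Φ) :
    (bisimRel K K' k).image (K.V p)ᶜ ⊆ (K'.V p)ᶜ := by
  rintro w' ⟨w, hw, hww'⟩
  exact mt (hww'.mem_V_iff p).2 hw

theorem img_bisimRel_image_subset (T : Set K.W) :
    K'.img ((bisimRel K K' (k + 1)).image T) ⊆ (bisimRel K K' k).image (K.img T) := by
  rintro v' ⟨w', ⟨w, hw, -, -, back⟩, hwv'⟩
  obtain ⟨v, hwv, hvv'⟩ := back v' hwv'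
  exact ⟨v, ⟨w, hw, hwv⟩, hvv'⟩

theorem bisimRel_image_pre_subset (S : Set K.W) :
    (bisimRel K K' (k + 1)).image (K.pre S) ⊆ K'.pre ((bisimRel K K' k).image S) := by
  rintro w' ⟨w, ⟨v, hv, hwv⟩, -, forth, -⟩
  obtain ⟨v', hwv', hvv'⟩ := forth v hwv
  exact ⟨v', ⟨v, hv, hvv'⟩, hwv'⟩

end BisimRel

namespace Kripke

variable {Φ : Type} {K : Kripke Φ} {T S : Set K.W}

theorem img_mono (K : Kripke Φ) : Monotone K.img :=
  fun _ _ hTS _ ⟨w, hw, hwv⟩ => ⟨w, hTS hw, hwv⟩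

theorem trs_img_inter (h : T ⊆ K.pre S) : K.trs T (K.img T ∩ S) := by
  refine ⟨Set.inter_subset_left, fun w hw => ?_⟩
  obtain ⟨v, hv, hwv⟩ := h hw
  exact ⟨v, ⟨⟨w, hw, hwv⟩, hv⟩, hwv⟩

end Kripke

theorem mli_bisim_invariance_general {Φ : Type} {φ : MLI Φ} {K K' : Kripke Φ}
    {T : Set K.W} {T' : Set K'.W} (hsat : φ.sat K T)
    (hT' : T' ⊆ (bisimRel K K' φ.md).image T) : φ.sat K' T' := by
  induction φ generalizing T T' with
  | atom p => exact hT'.trans <| (SetRel.image_mono hsat).trans (bisimRel_image_V_subset p)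
  | natom p =>
    have hT : T ⊆ (K.V p)ᶜ :=
      Set.subset_compl_iff_disjoint_right.2 (Set.disjoint_iff_inter_eq_empty.2 hsat)
    have hT'p : T' ⊆ (K'.V p)ᶜ :=
      hT'.trans <| (SetRel.image_mono hT).trans (bisimRel_image_compl_V_subset p)
    exact (Set.subset_compl_iff_disjoint_right.1 hT'p).inter_eq
  | and φ ψ ihφ ihψ =>
    exact ⟨ihφ hsat.1 (hT'.trans (bisimRel_image_anti (le_max_left _ _) T)),
      ihψ hsat.2 (hT'.trans (bisimRel_image_anti (le_max_right _ _) T))⟩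
  | or φ ψ ihφ ihψ =>
    obtain ⟨T₁, T₂, rfl, hφ, hψ⟩ := hsat
    let B := bisimRel K K' (MLI.or φ ψ).md
    have hsplit : T' = T' ∩ B.image T₁ ∪ T' ∩ B.image T₂ := by
      rw [← Set.inter_union_distrib_left, ← SetRel.image_union, Set.inter_eq_left.2 hT']
    exact ⟨_, _, hsplit,
      ihφ hφ (Set.inter_subset_right.trans (bisimRel_image_anti (le_max_left _ _) T₁)),
      ihψ hψ (Set.inter_subset_right.trans (bisimRel_image_anti (le_max_right _ _) T₂))⟩
  | dia φ ih =>
    obtain ⟨S, ⟨-, hTS⟩, hS⟩ := hsat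
    have hT'S : T' ⊆ K'.pre ((bisimRel K K' φ.md).image S) :=
      hT'.trans <| (SetRel.image_mono hTS).trans (bisimRel_image_pre_subset S)
    exact ⟨_, Kripke.trs_img_inter hT'S, ih hS Set.inter_subset_right⟩
  | box φ ih => exact ih hsat ((K'.img_mono hT').trans (img_bisimRel_image_subset T))
  | idis φ ψ ihφ ihψ =>
    exact hsat.imp (ihφ · (hT'.trans (bisimRel_image_anti (le_max_left _ _) T)))
      (ihψ · (hT'.trans (bisimRel_image_anti (le_max_right _ _) T)))

/-- For every `φ ∈ ML(⊻)(Φ)`, the class `‖φ‖` is closed under team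
`md(φ)`-bisimulation. -/
theorem mli_bisim_invariance {Φ : Type} (φ : MLI Φ) (K K' : Kripke Φ)
    (T : Set K.W) (T' : Set K'.W)
    (hsat : MLI.sat K φ T) (hbis : tbisim K K' (MLI.md φ) T T') :
    MLI.sat K' φ T' :=
  mli_bisim_invariance_general hsat hbis.2

end MDLTeam
end

section
/- Let Ψ be a finite set of ML(Φ)-formulas, let p ∈ Φ, and define the EMDL(Φ)-formulas γ := ⋀_{ψ∈Ψ} dep(ψ), γ⁰ := p ∧ ¬p, and γᵏ⁺¹ := (γᵏ ∨ γ). Then for every k ∈ ℕ, every Kripke model K over Φ, and every team T of K: K,T ⊨ γᵏ if and only if |tset_Ψ(K,T)| ≤ k. -/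
namespace MDLTeam

/-- `γ := ⋀_{ψ∈Ψ} dep(ψ)` (the empty conjunction being the tautology `p ∨ ¬p`). -/
noncomputable def gammaFrm {Φ : Type} (p : Φ) (Ψ : Set (MLFrm Φ)) (hΨ : Ψ.Finite) : EMDL Φ :=
  (hΨ.toFinset.toList.map fun ψ => EMDL.dep [] ψ).foldr EMDL.and
    (EMDL.or (EMDL.atom p) (EMDL.natom p))

/-- `γ⁰ := p ∧ ¬p` and `γᵏ⁺¹ := (γᵏ ∨ γ)`. -/
noncomputable def gammaPow {Φ : Type} (p : Φ) (Ψ : Set (MLFrm Φ)) (hΨ : Ψ.Finite) : ℕ → EMDL Φ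
  | 0 => EMDL.and (EMDL.atom p) (EMDL.natom p)
  | k + 1 => EMDL.or (gammaPow p Ψ hΨ k) (gammaFrm p Ψ hΨ)

/-!
A team satisfies a constancy atom `dep(ψ)` exactly when all its states agree on `ψ`, because
`ML`-formulas are flat. Hence `γ` says that a team realizes at most one `Ψ`-type, and each further
disjunct `γ` of `γᵏ` lets one split off the states of one more type.
-/

theorem encard_image_le_add_one_iff {α β : Type*} (f : α → β) (s : Set α) (k : ℕ∞) :
    (f '' s).encard ≤ k + 1 ↔
      ∃ s₁ s₂, s = s₁ ∪ s₂ ∧ (f '' s₁).encard ≤ k ∧ (f '' s₂).Subsingleton := by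
  constructor
  · intro h
    rcases s.eq_empty_or_nonempty with rfl | ⟨a, ha⟩
    · exact ⟨∅, ∅, by simp, by simp, by simp⟩
    · refine ⟨s \ f ⁻¹' {f a}, s ∩ f ⁻¹' {f a}, (Set.sdiff_union_inter _ _).symm, ?_, ?_⟩
      · rw [Set.image_sdiff_preimage]
        rwa [← Set.encard_sdiff_singleton_add_one (Set.mem_image_of_mem f ha),
          ENat.add_le_add_iff_right ENat.one_ne_top] at h
      · rw [Set.image_inter_preimage]
        exact Set.subsingleton_singleton.anti Set.inter_subset_right
  · rintro ⟨s₁, s₂, rfl, h₁, h₂⟩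
    calc (f '' (s₁ ∪ s₂)).encard
        = (f '' s₁ ∪ f '' s₂).encard := by rw [Set.image_union]
      _ ≤ (f '' s₁).encard + (f '' s₂).encard := Set.encard_union_le _ _
      _ ≤ k + 1 := add_le_add h₁ (Set.encard_le_one_iff_subsingleton.2 h₂)

section Semantics

variable {Φ : Type} (K : Kripke Φ)

theorem MLFrm.sat_iff_forall_psat (φ : MLFrm Φ) (T : Set K.W) :
    φ.sat K T ↔ ∀ w ∈ T, φ.psat K w := by
  induction φ generalizing T with
  | atom p => rfl
  | natom p => exact Set.disjoint_iff_inter_eq_empty.symm.trans Set.disjoint_left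
  | and φ ψ ihφ ihψ => simp only [sat, psat, ihφ, ihψ, forall₂_and]
  | or φ ψ ihφ ihψ =>
    simp only [sat, psat, ihφ, ihψ]
    constructor
    · rintro ⟨T₁, T₂, rfl, hφ, hψ⟩ w (hw | hw)
      exacts [Or.inl (hφ w hw), Or.inr (hψ w hw)]
    · intro h
      refine ⟨T ∩ {w | φ.psat K w}, T ∩ {w | ψ.psat K w}, ?_, fun _ hw => hw.2, fun _ hw => hw.2⟩
      rw [← Set.inter_union_distrib_left]
      exact (Set.inter_eq_left.2 h).symm
  | dia φ ih =>
    simp only [sat, psat, ih]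
    constructor
    · rintro ⟨S, ⟨_, hTS⟩, hS⟩ w hw
      obtain ⟨v, hv, hwv⟩ := hTS hw
      exact ⟨v, hwv, hS v hv⟩
    · intro h
      refine ⟨K.img T ∩ {v | φ.psat K v}, ⟨Set.inter_subset_left, fun w hw => ?_⟩,
        fun _ hv => hv.2⟩
      obtain ⟨v, hwv, hv⟩ := h w hw
      exact ⟨v, ⟨⟨w, hw, hwv⟩, hv⟩, hwv⟩
  | box φ ih =>
    simp only [sat, psat, ih]
    exact ⟨fun h w hw v hwv => h v ⟨w, hw, hwv⟩, fun h v ⟨w, hw, hwv⟩ => h w hw v hwv⟩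

theorem MLFrm.sat_singleton (φ : MLFrm Φ) (w : K.W) : φ.sat K {w} ↔ φ.psat K w := by
  simp only [sat_iff_forall_psat, Set.mem_singleton_iff, forall_eq]

namespace EMDL

theorem sat_atom_and_natom (p : Φ) (T : Set K.W) :
    (and (atom p) (natom p)).sat K T ↔ T = ∅ := by
  constructor
  · rintro ⟨hp, hnp⟩
    rwa [← Set.inter_eq_left.2 hp]
  · rintro rfl
    exact ⟨Set.empty_subset _, Set.empty_inter _⟩

theorem sat_atom_or_natom (p : Φ) (T : Set K.W) : (or (atom p) (natom p)).sat K T :=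
  ⟨T ∩ K.V p, T \ K.V p, (Set.inter_union_sdiff T _).symm, Set.inter_subset_right,
    Set.sdiff_inter_self⟩

theorem sat_foldr_and (l : List (EMDL Φ)) (χ : EMDL Φ) (T : Set K.W) :
    (l.foldr and χ).sat K T ↔ (∀ φ ∈ l, φ.sat K T) ∧ χ.sat K T := by
  induction l with
  | nil => simp only [List.foldr_nil, List.not_mem_nil, false_imp_iff, implies_true, true_and]
  | cons φ l ih => simp only [List.foldr_cons, sat, ih, List.forall_mem_cons, and_assoc]

theorem sat_dep_nil (θ : MLFrm Φ) (T : Set K.W) :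
    (dep [] θ).sat K T ↔ ∀ w ∈ T, ∀ v ∈ T, (θ.psat K w ↔ θ.psat K v) := by
  simp only [sat, List.not_mem_nil, false_imp_iff, implies_true, true_imp_iff,
    MLFrm.sat_singleton]

end EMDL

end Semantics

section Types

variable {Φ : Type} {Ψ : Set (MLFrm Φ)}

theorem typeSet_eq_typeSet_iff {K : Kripke Φ} {w v : K.W} :
    typeSet K Ψ w = typeSet K Ψ v ↔ ∀ ψ ∈ Ψ, (ψ.psat K w ↔ ψ.psat K v) := by
  simp only [typeSet, Set.ext_iff, Set.mem_ofPred_eq, and_congr_right_iff]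

theorem tset_finite (hΨ : Ψ.Finite) (K : Kripke Φ) (T : Set K.W) : (tset K Ψ T).Finite := by
  refine hΨ.finite_subsets.subset ?_
  rintro _ ⟨w, _, rfl⟩
  exact Set.sep_subset Ψ _

theorem tset_subsingleton_iff {K : Kripke Φ} {T : Set K.W} :
    (tset K Ψ T).Subsingleton ↔
      ∀ ψ ∈ Ψ, ∀ w ∈ T, ∀ v ∈ T, (ψ.psat K w ↔ ψ.psat K v) := by
  simp only [tset, Set.Subsingleton, Set.forall_mem_image, typeSet_eq_typeSet_iff]
  exact ⟨fun h ψ hψ w hw v hv => h hw hv ψ hψ, fun h w hw v hv ψ hψ => h ψ hψ w hw v hv⟩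

theorem sat_gammaFrm (hΨ : Ψ.Finite) (p : Φ) (K : Kripke Φ) (T : Set K.W) :
    (gammaFrm p Ψ hΨ).sat K T ↔ (tset K Ψ T).Subsingleton := by
  simp only [gammaFrm, EMDL.sat_foldr_and, EMDL.sat_atom_or_natom, and_true, List.forall_mem_map,
    Finset.mem_toList, Set.Finite.mem_toFinset, EMDL.sat_dep_nil, tset_subsingleton_iff]

end Types

/-- For every `k`, every Kripke model `K` over `Φ` and every team `T`,
`K,T ⊨ γᵏ` iff `|tset_Ψ(K,T)| ≤ k`. -/
theorem gamma_counts_types {Φ : Type} (Ψ : Set (MLFrm Φ)) (hΨ : Ψ.Finite) (p : Φ)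
    (k : ℕ) (K : Kripke Φ) (T : Set K.W) :
    EMDL.sat K (gammaPow p Ψ hΨ k) T ↔ (tset K Ψ T).ncard ≤ k := by
  rw [← Nat.cast_le (α := ℕ∞), (tset_finite hΨ K T).cast_ncard_eq]
  induction k generalizing T with
  | zero =>
    rw [gammaPow, EMDL.sat_atom_and_natom, Nat.cast_zero, nonpos_iff_eq_zero,
      Set.encard_eq_zero, tset, Set.image_eq_empty]
  | succ k ih =>
    simp only [gammaPow, EMDL.sat, ih, sat_gammaFrm, tset]
    rw [Nat.cast_succ, encard_image_le_add_one_iff]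

end MDLTeam
end

section
/- Every formula of ML(⊻)(Φ) is equivalent (over all Kripke models with teams) to a formula of the form ⊻Ψ, where Ψ is a finite set of ML(Φ)-formulas and ⊻Ψ denotes the intuitionistic disjunction of the members of Ψ: for every φ ∈ ML(⊻)(Φ) there is a finite set Ψ of ML(Φ)-formulas such that for every Kripke model K over Φ and team T of K, K,T ⊨ φ if and only if K,T ⊨ ψ for some ψ ∈ Ψ. -/
namespace MDLTeam

/-! Every connective of `ML(⊻)` commutes with `⊻`, because its team-semantical clause is built from
conjunctions and existential quantifiers over teams, or evaluates its argument at a single team.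
Hence all occurrences of `⊻` can be pulled to the front of a formula. -/

namespace MLFrm

variable {Φ : Type}

/-- Team semantics of the intuitionistic disjunction `⊻Ψ` of a set `Ψ` of `ML`-formulas. It is a
satisfaction relation rather than a formula, so `Ψ` may be empty (`⊻∅` holds in no team) or
infinite. -/
def satIdis (K : Kripke Φ) (Ψ : Set (MLFrm Φ)) (T : Set K.W) : Prop :=
  ∃ ψ ∈ Ψ, sat K ψ T

variable (K : Kripke Φ) (A B : Set (MLFrm Φ)) (T : Set K.W)

theorem satIdis_singleton (ψ : MLFrm Φ) : satIdis K {ψ} T ↔ sat K ψ T := by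
  simp only [satIdis, Set.mem_singleton_iff, exists_eq_left]

theorem satIdis_union : satIdis K (A ∪ B) T ↔ satIdis K A T ∨ satIdis K B T := by
  simp only [satIdis, Set.mem_union, or_and_right, exists_or]

theorem satIdis_image2_and :
    satIdis K (Set.image2 and A B) T ↔ satIdis K A T ∧ satIdis K B T := by
  simp only [satIdis, Set.exists_mem_image2, sat]
  constructor
  · rintro ⟨α, hα, β, hβ, hαT, hβT⟩
    exact ⟨⟨α, hα, hαT⟩, β, hβ, hβT⟩
  · rintro ⟨⟨α, hα, hαT⟩, β, hβ, hβT⟩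
    exact ⟨α, hα, β, hβ, hαT, hβT⟩

theorem satIdis_image2_or :
    satIdis K (Set.image2 or A B) T ↔
      ∃ T₁ T₂, T = T₁ ∪ T₂ ∧ satIdis K A T₁ ∧ satIdis K B T₂ := by
  simp only [satIdis, Set.exists_mem_image2, sat]
  constructor
  · rintro ⟨α, hα, β, hβ, T₁, T₂, hT, hαT₁, hβT₂⟩
    exact ⟨T₁, T₂, hT, ⟨α, hα, hαT₁⟩, β, hβ, hβT₂⟩
  · rintro ⟨T₁, T₂, hT, ⟨α, hα, hαT₁⟩, β, hβ, hβT₂⟩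
    exact ⟨α, hα, β, hβ, T₁, T₂, hT, hαT₁, hβT₂⟩

theorem satIdis_image_dia :
    satIdis K (dia '' A) T ↔ ∃ S, K.trs T S ∧ satIdis K A S := by
  simp only [satIdis, Set.exists_mem_image, sat]
  constructor
  · rintro ⟨α, hα, S, hTS, hαS⟩
    exact ⟨S, hTS, α, hα, hαS⟩
  · rintro ⟨S, hTS, α, hα, hαS⟩
    exact ⟨α, hα, S, hTS, hαS⟩

theorem satIdis_image_box : satIdis K (box '' A) T ↔ satIdis K A (K.img T) := by
  simp only [satIdis, Set.exists_mem_image, sat]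

end MLFrm

namespace MLI

variable {Φ : Type}

/-- The set `Ψ` of `ML`-formulas in the normal form `⊻Ψ` of an `ML(⊻)`-formula: its members arise
by replacing, in all possible ways, each occurrence of a subformula `φ ⊻ ψ` with `φ` or `ψ`. -/
def disjuncts : MLI Φ → Set (MLFrm Φ)
  | atom p => {.atom p}
  | natom p => {.natom p}
  | and φ ψ => Set.image2 .and (disjuncts φ) (disjuncts ψ)
  | or φ ψ => Set.image2 .or (disjuncts φ) (disjuncts ψ)
  | dia φ => .dia '' disjuncts φ
  | box φ => .box '' disjuncts φ
  | idis φ ψ => disjuncts φ ∪ disjuncts ψ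

theorem finite_disjuncts (φ : MLI Φ) : φ.disjuncts.Finite := by
  induction φ with
  | atom p => exact Set.finite_singleton _
  | natom p => exact Set.finite_singleton _
  | and φ ψ hφ hψ => exact hφ.image2 _ hψ
  | or φ ψ hφ hψ => exact hφ.image2 _ hψ
  | dia φ hφ => exact hφ.image _
  | box φ hφ => exact hφ.image _
  | idis φ ψ hφ hψ => exact hφ.union hψ

theorem satIdis_disjuncts_iff (K : Kripke Φ) (φ : MLI Φ) (T : Set K.W) :
    MLFrm.satIdis K φ.disjuncts T ↔ sat K φ T := by
  induction φ generalizing T with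
  | atom p => exact MLFrm.satIdis_singleton K T (.atom p)
  | natom p => exact MLFrm.satIdis_singleton K T (.natom p)
  | and φ ψ hφ hψ => simp only [disjuncts, MLFrm.satIdis_image2_and, hφ, hψ, sat]
  | or φ ψ hφ hψ => simp only [disjuncts, MLFrm.satIdis_image2_or, hφ, hψ, sat]
  | dia φ hφ => simp only [disjuncts, MLFrm.satIdis_image_dia, hφ, sat]
  | box φ hφ => simp only [disjuncts, MLFrm.satIdis_image_box, hφ, sat]
  | idis φ ψ hφ hψ => simp only [disjuncts, MLFrm.satIdis_union, hφ, hψ, sat]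

end MLI

/-- Every `ML(⊻)(Φ)`-formula is equivalent to an intuitionistic disjunction
`⊻Ψ` of a finite set `Ψ` of `ML(Φ)`-formulas. -/
theorem mli_normal_form {Φ : Type} (φ : MLI Φ) :
    ∃ Ψ : Set (MLFrm Φ), Ψ.Finite ∧
      ∀ (K : Kripke Φ) (T : Set K.W),
        MLI.sat K φ T ↔ ∃ ψ ∈ Ψ, MLFrm.sat K ψ T :=
  ⟨φ.disjuncts, φ.finite_disjuncts, fun K T => (MLI.satIdis_disjuncts_iff K φ T).symm⟩

end MDLTeam
end

section
/- For every formula φ ∈ ML(⊻)(Φ), every Kripke model K over Φ, and every team U of K that is minimal (under inclusion) with the property K,U ⊭ φ, we have |U| ≤ Dim(φ). Consequently, the lower dimension satisfies dim(φ) ≤ Dim(φ). -/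
namespace MDLTeam

/-!
Choosing a disjunct at every occurrence of `⊻` turns `φ` into finitely many `ML`-formulas, and a
team satisfies `φ` iff it lies in the truth set of one of them. Hence `|M(φ,K)|` is bounded
uniformly in `K`, and a team satisfies `φ` iff it is contained in a member of `M(φ,K)`. If `U` is
minimal with `K,U ⊭ φ`, choose for every `S ∈ M(φ,K)` a state of `U` outside `S`: the chosen states
form a subteam of `U` that still falsifies `φ`, so by minimality they exhaust `U`.
-/

theorem maximal_mem_lowerClosure_iff {α : Type*} [PartialOrder α] {s : Set α} {a : α} :
    Maximal (· ∈ lowerClosure s) a ↔ Maximal (· ∈ s) a :=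
  maximal_iff_maximal_of_imp_of_forall (fun _ h ↦ subset_lowerClosure h) fun _ h ↦
    let ⟨b, hb, hab⟩ := mem_lowerClosure.1 h
    ⟨b, hab, hb⟩

theorem encard_le_of_minimal_forall_not_subset {α : Type*} {ℱ : Set (Set α)} {U : Set α}
    (hU : Minimal (fun T ↦ ∀ S ∈ ℱ, ¬T ⊆ S) U) : U.encard ≤ ℱ.encard := by
  have exists_witness (S : ℱ) : ∃ u ∈ U, u ∉ S.1 := Set.not_subset.1 (hU.prop S S.2)
  choose u hu_mem hu_notMem using exists_witness
  have range_not_subset : ∀ S ∈ ℱ, ¬Set.range u ⊆ S :=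
    fun S hS h ↦ hu_notMem ⟨S, hS⟩ (h ⟨⟨S, hS⟩, rfl⟩)
  have range_eq : Set.range u = U :=
    hU.eq_of_subset range_not_subset (Set.range_subset_iff.2 hu_mem)
  calc U.encard = (u '' Set.univ).encard := by rw [Set.image_univ, range_eq]
    _ ≤ (Set.univ : Set ℱ).encard := Set.encard_image_le u _
    _ = ℱ.encard := Set.encard_univ ℱ

theorem exists_eq_union_iff_subset_union {α : Type*} {T A B : Set α} :
    (∃ T₁ T₂, T = T₁ ∪ T₂ ∧ T₁ ⊆ A ∧ T₂ ⊆ B) ↔ T ⊆ A ∪ B := by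
  constructor
  · rintro ⟨T₁, T₂, rfl, h₁, h₂⟩
    exact Set.union_subset_union h₁ h₂
  · intro h
    refine ⟨T ∩ A, T ∩ B, ?_, Set.inter_subset_right, Set.inter_subset_right⟩
    rw [← Set.inter_union_distrib_left, Set.inter_eq_left.2 h]

section

variable {Φ : Type} {K : Kripke Φ}

theorem Kripke.exists_trs_subset_iff {T A : Set K.W} : (∃ S, K.trs T S ∧ S ⊆ A) ↔ T ⊆ K.pre A := by
  constructor
  · rintro ⟨S, ⟨-, hTS⟩, hSA⟩ w hw
    obtain ⟨v, hv, hwv⟩ := hTS hw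
    exact ⟨v, hSA hv, hwv⟩
  · intro h
    refine ⟨A ∩ K.img T, ⟨Set.inter_subset_right, fun w hw ↦ ?_⟩, Set.inter_subset_left⟩
    obtain ⟨v, hv, hwv⟩ := h hw
    exact ⟨v, ⟨hv, w, hw, hwv⟩, hwv⟩

/-- The set of states at which an `ML`-formula holds in the pointwise semantics,
i.e. the largest team satisfying it. -/
def MLFrm.truthSet (K : Kripke Φ) (α : MLFrm Φ) : Set K.W := {w | α.psat K w}

namespace MLFrm

variable {α β : MLFrm Φ}

theorem truthSet_atom {p : Φ} : (atom p).truthSet K = K.V p := rfl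

theorem truthSet_natom {p : Φ} : (natom p).truthSet K = (K.V p)ᶜ := rfl

theorem truthSet_and : (and α β).truthSet K = α.truthSet K ∩ β.truthSet K := rfl

theorem truthSet_or : (or α β).truthSet K = α.truthSet K ∪ β.truthSet K := rfl

theorem truthSet_dia : (dia α).truthSet K = K.pre (α.truthSet K) :=
  Set.ext fun _ ↦ exists_congr fun _ ↦ and_comm

theorem subset_truthSet_box {T : Set K.W} :
    T ⊆ (box α).truthSet K ↔ K.img T ⊆ α.truthSet K :=
  ⟨fun h _ ⟨_, hw, hwv⟩ ↦ h hw _ hwv, fun h w hw _ hwv ↦ h ⟨w, hw, hwv⟩⟩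

end MLFrm

namespace MLI

/-- The resolutions of an `ML(⊻)`-formula: the `ML`-formulas obtained by replacing every
occurrence of a subformula `φ ⊻ ψ` by one of its two disjuncts, independently of the other
occurrences. The intuitionistic disjunction of the resolutions is equivalent to the formula. -/
def resolutions : MLI Φ → Set (MLFrm Φ)
  | atom p => {.atom p}
  | natom p => {.natom p}
  | and φ ψ => Set.image2 .and φ.resolutions ψ.resolutions
  | or φ ψ => Set.image2 .or φ.resolutions ψ.resolutions
  | dia φ => .dia '' φ.resolutions
  | box φ => .box '' φ.resolutions
  | idis φ ψ => φ.resolutions ∪ ψ.resolutions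

theorem finite_resolutions (φ : MLI Φ) : φ.resolutions.Finite := by
  induction φ with
  | atom | natom => exact Set.finite_singleton _
  | and _ _ ihφ ihψ | or _ _ ihφ ihψ => exact ihφ.image2 _ ihψ
  | dia _ ih | box _ ih => exact ih.image _
  | idis _ _ ihφ ihψ => exact ihφ.union ihψ

theorem sat_iff_exists_resolution {φ : MLI Φ} {T : Set K.W} :
    φ.sat K T ↔ ∃ α ∈ φ.resolutions, T ⊆ α.truthSet K := by
  induction φ generalizing T with
  | atom p =>
    simp only [sat, resolutions, Set.mem_singleton_iff, exists_eq_left, MLFrm.truthSet_atom]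
  | natom p =>
    simp only [sat, resolutions, Set.mem_singleton_iff, exists_eq_left, MLFrm.truthSet_natom,
      Set.subset_compl_iff_disjoint_right, Set.disjoint_iff_inter_eq_empty]
  | and φ ψ ihφ ihψ =>
    simp only [sat, ihφ, ihψ, resolutions, Set.exists_mem_image2, MLFrm.truthSet_and,
      Set.subset_inter_iff]
    exact ⟨fun ⟨⟨α, hα, hTα⟩, β, hβ, hTβ⟩ ↦ ⟨α, hα, β, hβ, hTα, hTβ⟩,
      fun ⟨α, hα, β, hβ, hTα, hTβ⟩ ↦ ⟨⟨α, hα, hTα⟩, β, hβ, hTβ⟩⟩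
  | or φ ψ ihφ ihψ =>
    simp only [sat, ihφ, ihψ, resolutions, Set.exists_mem_image2, MLFrm.truthSet_or,
      ← exists_eq_union_iff_subset_union]
    exact ⟨fun ⟨T₁, T₂, hT, ⟨α, hα, h₁⟩, β, hβ, h₂⟩ ↦ ⟨α, hα, β, hβ, T₁, T₂, hT, h₁, h₂⟩,
      fun ⟨α, hα, β, hβ, T₁, T₂, hT, h₁, h₂⟩ ↦ ⟨T₁, T₂, hT, ⟨α, hα, h₁⟩, β, hβ, h₂⟩⟩
  | dia φ ih =>
    simp only [sat, ih, resolutions, Set.exists_mem_image, MLFrm.truthSet_dia,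
      ← Kripke.exists_trs_subset_iff]
    exact ⟨fun ⟨S, hTS, α, hα, hSα⟩ ↦ ⟨α, hα, S, hTS, hSα⟩,
      fun ⟨α, hα, S, hTS, hSα⟩ ↦ ⟨S, hTS, α, hα, hSα⟩⟩
  | box φ ih =>
    simp only [sat, ih, resolutions, Set.exists_mem_image, MLFrm.subset_truthSet_box]
  | idis φ ψ ihφ ihψ =>
    simp only [sat, ihφ, ihψ, resolutions, Set.mem_union, or_and_right, exists_or]

theorem sat_iff_mem_lowerClosure {φ : MLI Φ} {T : Set K.W} :
    φ.sat K T ↔ T ∈ lowerClosure (MLFrm.truthSet K '' φ.resolutions) := by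
  simp only [sat_iff_exists_resolution, mem_lowerClosure, Set.exists_mem_image]

theorem mem_Mset_iff_maximal {φ : MLI Φ} {T : Set K.W} :
    T ∈ Mset K φ ↔ Maximal (φ.sat K) T := by
  simp only [Mset, Set.mem_ofPred_eq, maximal_iff, eq_comm]

theorem mem_Nset_iff_minimal {φ : MLI Φ} {T : Set K.W} :
    T ∈ Nset K φ ↔ Minimal (¬φ.sat K ·) T := by
  simp only [Nset, Set.mem_ofPred_eq, minimal_iff, eq_comm]

theorem mem_Mset_iff_maximal_truthSet {φ : MLI Φ} {T : Set K.W} :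
    T ∈ Mset K φ ↔ Maximal (· ∈ MLFrm.truthSet K '' φ.resolutions) T := by
  rw [← maximal_mem_lowerClosure_iff, mem_Mset_iff_maximal]
  simp only [← sat_iff_mem_lowerClosure]

theorem sat_iff_exists_mem_Mset {φ : MLI Φ} {T : Set K.W} :
    φ.sat K T ↔ ∃ S ∈ Mset K φ, T ⊆ S := by
  constructor
  · intro hT
    obtain ⟨α, hα, hTα⟩ := sat_iff_exists_resolution.1 hT
    obtain ⟨S, hαS, hS⟩ :=
      (φ.finite_resolutions.image (MLFrm.truthSet K)).exists_le_maximal ⟨α, hα, rfl⟩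
    exact ⟨S, mem_Mset_iff_maximal_truthSet.2 hS, hTα.trans hαS⟩
  · rintro ⟨S, hS, hTS⟩
    rw [sat_iff_mem_lowerClosure]
    exact (lowerClosure _).lower hTS (sat_iff_mem_lowerClosure.1 hS.1)

theorem encard_Mset_le_encard_resolutions (K : Kripke Φ) (φ : MLI Φ) :
    (Mset K φ).encard ≤ φ.resolutions.encard :=
  (Set.encard_le_encard fun _ hT ↦ (mem_Mset_iff_maximal_truthSet.1 hT).prop).trans
    (Set.encard_image_le _ _)

theorem encard_Mset_le_Dim (K : Kripke Φ) (φ : MLI Φ) : (Mset K φ).encard ≤ φ.Dim := by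
  have exists_bound : {m : ℕ | ∀ K : Kripke Φ,
      (Mset K φ).Finite ∧ (Mset K φ).ncard ≤ m}.Nonempty := by
    refine ⟨φ.resolutions.ncard, fun K ↦ Set.encard_le_coe_iff_finite_ncard_le.1 ?_⟩
    rw [φ.finite_resolutions.cast_ncard_eq]
    exact encard_Mset_le_encard_resolutions K φ
  exact Set.encard_le_coe_iff_finite_ncard_le.2 (Nat.sInf_mem exists_bound K)

theorem encard_le_encard_Mset_of_mem_Nset {φ : MLI Φ} {U : Set K.W} (hU : U ∈ Nset K φ) :
    U.encard ≤ (Mset K φ).encard := by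
  refine encard_le_of_minimal_forall_not_subset ?_
  simpa only [mem_Nset_iff_minimal, sat_iff_exists_mem_Mset, not_exists, not_and] using hU

end MLI

end

/-- Every team `U` minimal with `K,U ⊭ φ` satisfies `|U| ≤ Dim(φ)`;
consequently `dim(φ) ≤ Dim(φ)`. -/
theorem ldim_le_dim {Φ : Type} (φ : MLI Φ) :
    (∀ (K : Kripke Φ), ∀ U ∈ MLI.Nset K φ, U.Finite ∧ U.ncard ≤ MLI.Dim φ) ∧
    MLI.ldim φ ≤ MLI.Dim φ := by
  have bound (K : Kripke Φ) (U) (hU : U ∈ MLI.Nset K φ) : U.Finite ∧ U.ncard ≤ MLI.Dim φ :=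
    Set.encard_le_coe_iff_finite_ncard_le.1 <|
      (MLI.encard_le_encard_Mset_of_mem_Nset hU).trans (MLI.encard_Mset_le_Dim K φ)
  exact ⟨bound, Nat.sInf_le bound⟩

end MDLTeam
end

section
/- For every dependence atom dep(ψ₁,…,ψₙ,θ) of EMDL(Φ) and every Kripke model K over Φ, |M(dep(ψ₁,…,ψₙ,θ),K)| ≤ 2^(2^n); hence Dim(dep(ψ₁,…,ψₙ,θ)) ≤ 2^(2^n). Moreover, if ψ₁,…,ψₙ and θ are n+1 distinct proposition symbols, then Dim(dep(ψ₁,…,ψₙ,θ)) = 2^(2^n), i.e., there is a Kripke model K over Φ with |M(dep(ψ₁,…,ψₙ,θ),K)| = 2^(2^n). -/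
namespace MDLTeam

/-!
A team satisfies `dep(ψ₁,…,ψₙ,θ)` exactly when, on that team, the truth value of `θ` is a function
`F` of the truth values of `ψ₁,…,ψₙ`. So each maximal team consists of all states at which `θ`
agrees with such an `F`, and there are `2 ^ 2 ^ n` Boolean functions `F` of `n` arguments. If every
combination of truth values of `ψ₁,…,ψₙ,θ` is realised at some state, then distinct `F` give
distinct teams, each of them maximal, and the bound is attained. For distinct proposition symbols
this happens in the model whose states are all valuations.
-/

section FunctionalDependence

variable {W α β : Type*} {f : W → α} {g : W → β} {T : Set W}

/-- Functional dependence on a team: on `T`, the value of `g` is determined by that of `f`. For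
truth values `f` and `g` this is the semantics of a dependence atom. -/
def DeterminesOn (f : W → α) (g : W → β) (T : Set W) : Prop :=
  ∀ w ∈ T, ∀ v ∈ T, f w = f v → g w = g v

/-- The agreement set of `F`: the largest team on which `g` is computed from `f` by `F`. -/
def agreementSet (f : W → α) (g : W → β) (F : α → β) : Set W :=
  {w | g w = F (f w)}

theorem DeterminesOn.exists_subset_agreementSet [Nonempty β] (hT : DeterminesOn f g T) :
    ∃ F, T ⊆ agreementSet f g F := by
  have hfactors : (T.domRestrict g).FactorsThrough (T.domRestrict f) :=
    fun w v => hT w w.2 v v.2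
  obtain ⟨F, hF⟩ := (Function.factorsThrough_iff _).1 hfactors
  exact ⟨F, fun w hw => congrFun hF ⟨w, hw⟩⟩

theorem determinesOn_agreementSet (F : α → β) : DeterminesOn f g (agreementSet f g F) := by
  intro w hw v hv hwv
  calc g w = F (f w) := hw
    _ = F (f v) := congrArg F hwv
    _ = g v := hv.symm

theorem mem_range_agreementSet_of_maximal [Nonempty β] (hT : Maximal (DeterminesOn f g) T) :
    T ∈ Set.range (agreementSet f g) := by
  obtain ⟨F, hTF⟩ := hT.prop.exists_subset_agreementSet
  exact ⟨F, (hT.eq_of_subset (determinesOn_agreementSet F) hTF).symm⟩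

theorem agreementSet_injective (hfg : Function.Surjective fun w => (f w, g w)) :
    Function.Injective (agreementSet f g) := by
  intro F G hFG
  funext a
  obtain ⟨w, hw⟩ := hfg (a, F a)
  obtain ⟨rfl, hgw⟩ := Prod.mk.inj hw
  have hwG : w ∈ agreementSet f g G := hFG.subset hgw
  exact hgw.symm.trans hwG

theorem maximal_agreementSet (hfg : Function.Surjective fun w => (f w, g w)) (F : α → β) :
    Maximal (DeterminesOn f g) (agreementSet f g F) := by
  refine ⟨determinesOn_agreementSet F, fun S hS hFS w hw => ?_⟩
  obtain ⟨v, hv⟩ := hfg (f w, F (f w))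
  obtain ⟨hfv, hgv⟩ := Prod.mk.inj hv
  have hvF : v ∈ agreementSet f g F := hgv.trans (congrArg F hfv.symm)
  exact (hS w hw v (hFS hvF) hfv.symm).trans hgv

theorem setOf_maximal_determinesOn [Nonempty β] (hfg : Function.Surjective fun w => (f w, g w)) :
    {T | Maximal (DeterminesOn f g) T} = Set.range (agreementSet f g) :=
  Set.Subset.antisymm (fun _ => mem_range_agreementSet_of_maximal)
    (Set.range_subset_iff.2 (maximal_agreementSet hfg))

theorem finite_maximal_determinesOn [Nonempty β] [Finite α] [Finite β] (f : W → α) (g : W → β) :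
    {T | Maximal (DeterminesOn f g) T}.Finite :=
  (Set.finite_range (agreementSet f g)).subset fun _ => mem_range_agreementSet_of_maximal

theorem ncard_maximal_determinesOn_le [Nonempty β] [Finite α] [Finite β] (f : W → α) (g : W → β) :
    {T | Maximal (DeterminesOn f g) T}.ncard ≤ Nat.card β ^ Nat.card α :=
  calc {T | Maximal (DeterminesOn f g) T}.ncard
      ≤ (Set.range (agreementSet f g)).ncard :=
        Set.ncard_le_ncard fun _ => mem_range_agreementSet_of_maximal
    _ ≤ Nat.card (α → β) := Finite.card_range_le _
    _ = Nat.card β ^ Nat.card α := Nat.card_fun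

theorem ncard_maximal_determinesOn [Nonempty β] [Finite α]
    (hfg : Function.Surjective fun w => (f w, g w)) :
    {T | Maximal (DeterminesOn f g) T}.ncard = Nat.card β ^ Nat.card α := by
  rw [setOf_maximal_determinesOn hfg, Set.ncard_range_of_injective (agreementSet_injective hfg),
    Nat.card_fun]

end FunctionalDependence

section DependenceAtom

variable {Φ : Type} {n : ℕ}

/-- Truth of an `ML`-formula at a state, that is, on the singleton team, as in the semantics of
dependence atoms. -/
def MLFrm.TrueAt (K : Kripke Φ) (ψ : MLFrm Φ) (w : K.W) : Prop :=
  ψ.sat K {w}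

/-- The truth values at a state of a family of `ML`-formulas. Compared with `typeSet` it is
indexed by the family, so that its codomain has `2 ^ n` elements even if formulas repeat. -/
def MLFrm.truthValues {ι : Type*} (K : Kripke Φ) (ψs : ι → MLFrm Φ) (w : K.W) : ι → Prop :=
  fun i => (ψs i).TrueAt K w

theorem EMDL.sat_dep_iff_determinesOn {K : Kripke Φ} {ψs : Fin n → MLFrm Φ} {θ : MLFrm Φ}
    {T : Set K.W} :
    (dep (List.ofFn ψs) θ).sat K T ↔ DeterminesOn (MLFrm.truthValues K ψs) (θ.TrueAt K) T := by
  simp only [EMDL.sat, List.forall_mem_ofFn_iff, DeterminesOn, MLFrm.truthValues,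
    MLFrm.TrueAt, funext_iff, eq_iff_iff]

theorem EMDL.Mset_eq_setOf_maximal (K : Kripke Φ) (φ : EMDL Φ) :
    Mset K φ = {T | Maximal (φ.sat K) T} := by
  simp only [Mset, maximal_iff, eq_comm]

theorem EMDL.Mset_dep (K : Kripke Φ) (ψs : Fin n → MLFrm Φ) (θ : MLFrm Φ) :
    Mset K (dep (List.ofFn ψs) θ) =
      {T | Maximal (DeterminesOn (MLFrm.truthValues K ψs) (θ.TrueAt K)) T} := by
  simp only [Mset_eq_setOf_maximal, Maximal, sat_dep_iff_determinesOn]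

theorem EMDL.finite_Mset_dep (K : Kripke Φ) (ψs : Fin n → MLFrm Φ) (θ : MLFrm Φ) :
    (Mset K (dep (List.ofFn ψs) θ)).Finite :=
  Mset_dep K ψs θ ▸ finite_maximal_determinesOn _ _

theorem EMDL.ncard_Mset_dep_le (K : Kripke Φ) (ψs : Fin n → MLFrm Φ) (θ : MLFrm Φ) :
    (Mset K (dep (List.ofFn ψs) θ)).ncard ≤ 2 ^ 2 ^ n := by
  simpa [Mset_dep] using ncard_maximal_determinesOn_le (MLFrm.truthValues K ψs) (θ.TrueAt K)

theorem EMDL.ncard_Mset_dep_of_surjective {K : Kripke Φ} {ψs : Fin n → MLFrm Φ} {θ : MLFrm Φ}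
    (h : Function.Surjective fun w => (MLFrm.truthValues K ψs w, θ.TrueAt K w)) :
    (Mset K (dep (List.ofFn ψs) θ)).ncard = 2 ^ 2 ^ n := by
  simpa [Mset_dep] using ncard_maximal_determinesOn h

theorem EMDL.Dim_le {φ : EMDL Φ} {m : ℕ} (h : ∀ K, (Mset K φ).Finite ∧ (Mset K φ).ncard ≤ m) :
    Dim φ ≤ m :=
  Nat.sInf_le h

theorem EMDL.Dim_eq_ncard_Mset {φ : EMDL Φ} {K : Kripke Φ}
    (h : ∀ K', (Mset K' φ).Finite ∧ (Mset K' φ).ncard ≤ (Mset K φ).ncard) :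
    Dim φ = (Mset K φ).ncard :=
  (Dim_le h).antisymm (le_csInf ⟨_, h⟩ fun _ hm => (hm K).2)

/-- The model whose states are all valuations of the proposition symbols. Only propositional truth
matters here, so the accessibility relation is empty. -/
def Kripke.valuationModel (Φ : Type) : Kripke Φ where
  W := Φ → Prop
  R _ _ := False
  V p := {w | w p}

theorem MLFrm.trueAt_atom_valuationModel {p : Φ} {w : Φ → Prop} :
    (atom p).TrueAt (.valuationModel Φ) w ↔ w p :=
  Set.singleton_subset_iff

theorem MLFrm.surjective_truthValues_valuationModel {ι : Type*} {ps : ι → Φ} {q : Φ}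
    (hps : Function.Injective ps) (hq : ∀ i, ps i ≠ q) :
    Function.Surjective fun w =>
      (truthValues (.valuationModel Φ) (fun i => atom (ps i)) w,
        (atom q).TrueAt (.valuationModel Φ) w) := by
  rintro ⟨t, b⟩
  refine ⟨Function.extend ps t fun _ => b, Prod.ext (funext fun i => propext ?_) (propext ?_)⟩
  · exact trueAt_atom_valuationModel.trans (iff_of_eq (hps.extend_apply ..))
  · exact trueAt_atom_valuationModel.trans
      (iff_of_eq (Function.extend_apply' _ _ _ fun ⟨i, hi⟩ => hq i hi))

end DependenceAtom

/-- For every dependence atom `dep(ψ₁,…,ψₙ,θ)` of `EMDL(Φ)` and Kripke model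
`K`, `|M(dep(ψ₁,…,ψₙ,θ),K)| ≤ 2^(2^n)`, hence `Dim(dep(ψ₁,…,ψₙ,θ)) ≤ 2^(2^n)`; moreover,
if `ψ₁,…,ψₙ,θ` are `n+1` distinct proposition symbols then equality holds, witnessed by a
Kripke model with `2^(2^n)` maximal teams. -/
theorem dep_atom_dimension {Φ : Type} (n : ℕ) :
    (∀ (ψs : Fin n → MLFrm Φ) (θ : MLFrm Φ) (K : Kripke Φ),
      (EMDL.Mset K (EMDL.dep (List.ofFn ψs) θ)).Finite ∧
      (EMDL.Mset K (EMDL.dep (List.ofFn ψs) θ)).ncard ≤ 2 ^ 2 ^ n) ∧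
    (∀ (ψs : Fin n → MLFrm Φ) (θ : MLFrm Φ),
      EMDL.Dim (EMDL.dep (List.ofFn ψs) θ) ≤ 2 ^ 2 ^ n) ∧
    (∀ (ps : Fin n → Φ) (q : Φ), Function.Injective ps → (∀ i, ps i ≠ q) →
      EMDL.Dim (EMDL.dep (List.ofFn fun i => MLFrm.atom (ps i)) (MLFrm.atom q)) = 2 ^ 2 ^ n ∧
      ∃ K : Kripke Φ,
        (EMDL.Mset K (EMDL.dep (List.ofFn fun i => MLFrm.atom (ps i)) (MLFrm.atom q))).Finite ∧
        (EMDL.Mset K (EMDL.dep (List.ofFn fun i => MLFrm.atom (ps i)) (MLFrm.atom q))).ncard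
          = 2 ^ 2 ^ n) := by
  have upper_bound (ψs : Fin n → MLFrm Φ) (θ : MLFrm Φ) (K : Kripke Φ) :=
    And.intro (EMDL.finite_Mset_dep K ψs θ) (EMDL.ncard_Mset_dep_le K ψs θ)
  refine ⟨upper_bound, fun ψs θ => EMDL.Dim_le (upper_bound ψs θ), fun ps q hps hq => ?_⟩
  have attained := EMDL.ncard_Mset_dep_of_surjective
    (MLFrm.surjective_truthValues_valuationModel hps hq)
  refine ⟨?_, .valuationModel Φ, EMDL.finite_Mset_dep _ _ _, attained⟩
  rw [← attained]
  exact EMDL.Dim_eq_ncard_Mset fun K => attained ▸ upper_bound _ _ K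

end MDLTeam
end

section
/- For every formula φ ∈ ML(⊻)(Φ) and every Kripke model K over Φ, |M(φ,K)| ≤ 2^(occ_⊻(φ)); hence Dim(φ) ≤ 2^(occ_⊻(φ)). -/
namespace MDLTeam

/-!
Every family `‖φ‖^K` is a lower set generated by at most `2 ^ occ_⊻(φ)` teams. A literal has one
generator. For `∧` and `∨` one takes pairwise intersections and unions of generators, and the
modalities send a generator `A` to `R⁻¹[A]` and to `{w | R[{w}] ⊆ A}`; the bounds multiply or stay
the same. Only `⊻`, which takes the union of two families, adds the bounds, and
`2 ^ m + 2 ^ n ≤ 2 ^ (m + n + 1)`. Maximal teams are among the generators.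
-/

open scoped FinsetFamily SetFamily

section LowerClosure

variable {α β : Type*}

theorem coe_lowerClosure_sups [DistribLattice α] (s t : Set α) :
    (lowerClosure (s ⊻ t) : Set α) = (lowerClosure s : Set α) ⊻ (lowerClosure t : Set α) := by
  ext x
  constructor
  · rintro ⟨_, ⟨a, ha, b, hb, rfl⟩, hx⟩
    exact ⟨x ⊓ a, ⟨a, ha, inf_le_right⟩, x ⊓ b, ⟨b, hb, inf_le_right⟩, by
      simp only [← inf_sup_left, inf_eq_left.2 hx]⟩
  · rintro ⟨x₁, ⟨a, ha, hx₁⟩, x₂, ⟨b, hb, hx₂⟩, rfl⟩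
    exact ⟨a ⊔ b, Set.sup_mem_sups ha hb, sup_le_sup hx₁ hx₂⟩

theorem preimage_lowerClosure_of_galoisConnection [Preorder α] [Preorder β] {l : α → β}
    {u : β → α} (gc : GaloisConnection l u) (s : Set β) :
    l ⁻¹' (lowerClosure s : Set β) = lowerClosure (u '' s) := by
  ext x
  simp only [Set.mem_preimage, SetLike.mem_coe, mem_lowerClosure, Set.exists_mem_image, gc x _]

theorem lowerClosure_image_lowerClosure [Preorder α] [Preorder β] {f : α → β}
    (hf : Monotone f) (s : Set α) :
    lowerClosure (f '' (lowerClosure s : Set α)) = lowerClosure (f '' s) := by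
  refine le_antisymm (lowerClosure_min ?_ (lowerClosure (f '' s)).lower)
    (lowerClosure_mono (Set.image_mono subset_lowerClosure))
  rintro _ ⟨x, ⟨a, ha, hxa⟩, rfl⟩
  exact ⟨f a, Set.mem_image_of_mem f ha, hf hxa⟩

end LowerClosure

/-- `LowerGenerated n s`: the set `s` is the lower closure of at most `n` elements. The bound is
part of the notion so that the calculus below can track it. -/
def LowerGenerated {α : Type*} [Preorder α] (n : ℕ) (s : Set α) : Prop :=
  ∃ F : Finset α, F.card ≤ n ∧ (lowerClosure (F : Set α) : Set α) = s

namespace LowerGenerated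

variable {α β : Type*} {m n : ℕ} {s t : Set α}

theorem mono [Preorder α] (hs : LowerGenerated m s) (hmn : m ≤ n) : LowerGenerated n s :=
  let ⟨F, hF, hFs⟩ := hs
  ⟨F, hF.trans hmn, hFs⟩

theorem isLowerSet [Preorder α] (hs : LowerGenerated n s) : IsLowerSet s := by
  obtain ⟨F, -, rfl⟩ := hs
  exact (lowerClosure (F : Set α)).lower

theorem Iic [Preorder α] (a : α) : LowerGenerated 1 (Set.Iic a) :=
  ⟨{a}, (Finset.card_singleton a).le, by
    rw [Finset.coe_singleton, lowerClosure_singleton, LowerSet.coe_Iic]⟩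

theorem union [Preorder α] (hs : LowerGenerated m s) (ht : LowerGenerated n t) :
    LowerGenerated (m + n) (s ∪ t) := by
  classical
  obtain ⟨F, hF, rfl⟩ := hs
  obtain ⟨G, hG, rfl⟩ := ht
  refine ⟨F ∪ G, (Finset.card_union_le F G).trans (add_le_add hF hG), ?_⟩
  rw [Finset.coe_union, lowerClosure_union, LowerSet.coe_sup]

theorem inter [SemilatticeInf α] (hs : LowerGenerated m s) (ht : LowerGenerated n t) :
    LowerGenerated (m * n) (s ∩ t) := by
  classical
  obtain ⟨F, hF, rfl⟩ := hs
  obtain ⟨G, hG, rfl⟩ := ht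
  refine ⟨F ⊼ G, (Finset.card_infs_le F G).trans (Nat.mul_le_mul hF hG), ?_⟩
  rw [Finset.coe_infs, lowerClosure_infs, LowerSet.coe_inf]

theorem sups [DistribLattice α] (hs : LowerGenerated m s) (ht : LowerGenerated n t) :
    LowerGenerated (m * n) (s ⊻ t) := by
  classical
  obtain ⟨F, hF, rfl⟩ := hs
  obtain ⟨G, hG, rfl⟩ := ht
  refine ⟨F ⊻ G, (Finset.card_sups_le F G).trans (Nat.mul_le_mul hF hG), ?_⟩
  rw [Finset.coe_sups, coe_lowerClosure_sups]

theorem preimage [Preorder α] [Preorder β] (hs : LowerGenerated n s) {l : β → α} {u : α → β}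
    (gc : GaloisConnection l u) : LowerGenerated n (l ⁻¹' s) := by
  classical
  obtain ⟨F, hF, rfl⟩ := hs
  refine ⟨F.image u, Finset.card_image_le.trans hF, ?_⟩
  rw [Finset.coe_image, preimage_lowerClosure_of_galoisConnection gc]

theorem lowerClosure_image [Preorder α] [Preorder β] (hs : LowerGenerated n s) {f : α → β}
    (hf : Monotone f) : LowerGenerated n (lowerClosure (f '' s) : Set β) := by
  classical
  obtain ⟨F, hF, rfl⟩ := hs
  refine ⟨F.image f, Finset.card_image_le.trans hF, ?_⟩
  rw [Finset.coe_image, lowerClosure_image_lowerClosure hf]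

theorem finite_maximal_and_ncard_le [PartialOrder α] (hs : LowerGenerated n s) :
    {x | Maximal (· ∈ s) x}.Finite ∧ {x | Maximal (· ∈ s) x}.ncard ≤ n := by
  obtain ⟨F, hF, rfl⟩ := hs
  have maximal_subset : {x | Maximal (· ∈ (lowerClosure (F : Set α) : Set α)) x} ⊆ F := by
    rintro x ⟨⟨a, ha, hxa⟩, hmax⟩
    rwa [hxa.antisymm (hmax (subset_lowerClosure ha) hxa)]
  refine ⟨F.finite_toSet.subset maximal_subset, ?_⟩
  calc _ ≤ (F : Set α).ncard := Set.ncard_le_ncard maximal_subset F.finite_toSet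
    _ = F.card := Set.ncard_coe_finset F
    _ ≤ n := hF

end LowerGenerated

namespace Kripke

variable {Φ : Type} (K : Kripke Φ)

theorem img_core_gc : GaloisConnection K.img (SetRel.core {e | K.R e.1 e.2}) :=
  SetRel.image_core_gc (R := {e | K.R e.1 e.2})

theorem pre_mono : Monotone K.pre :=
  fun _ _ hAB _ ⟨v, hv, hwv⟩ => ⟨v, hAB hv, hwv⟩

theorem trs_img_inter_s18 {T A : Set K.W} (hT : T ⊆ K.pre A) : K.trs T (K.img T ∩ A) := by
  refine ⟨Set.inter_subset_left, fun w hw => ?_⟩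
  obtain ⟨v, hv, hwv⟩ := hT hw
  exact ⟨v, ⟨⟨w, hw, hwv⟩, hv⟩, hwv⟩

end Kripke

namespace MLI

variable {Φ : Type} (K : Kripke Φ)

/-- The family `‖φ‖^K` of teams of `K` satisfying `φ`. -/
def teams (φ : MLI Φ) : Set (Set K.W) := {T | sat K φ T}

theorem teams_atom (p : Φ) : teams K (atom p) = Set.Iic (K.V p) := rfl

theorem teams_natom (p : Φ) : teams K (natom p) = Set.Iic (K.V p)ᶜ :=
  Set.ext fun _ => Set.disjoint_iff_inter_eq_empty.symm.trans
    Set.subset_compl_iff_disjoint_right.symm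

theorem teams_and (φ ψ : MLI Φ) : teams K (and φ ψ) = teams K φ ∩ teams K ψ := rfl

theorem teams_or (φ ψ : MLI Φ) : teams K (or φ ψ) = teams K φ ⊻ teams K ψ := by
  ext T
  constructor
  · rintro ⟨T₁, T₂, rfl, h₁, h₂⟩
    exact Set.sup_mem_sups h₁ h₂
  · rintro ⟨T₁, h₁, T₂, h₂, rfl⟩
    exact ⟨T₁, T₂, rfl, h₁, h₂⟩

theorem teams_dia {φ : MLI Φ} (hφ : IsLowerSet (teams K φ)) :
    teams K (dia φ) = lowerClosure (K.pre '' teams K φ) := by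
  ext T
  constructor
  · rintro ⟨S, hTS, hS⟩
    exact ⟨K.pre S, Set.mem_image_of_mem K.pre hS, hTS.2⟩
  · rintro ⟨_, ⟨A, hA, rfl⟩, hT⟩
    exact ⟨K.img T ∩ A, K.trs_img_inter_s18 hT, hφ Set.inter_subset_right hA⟩

theorem teams_box (φ : MLI Φ) : teams K (box φ) = K.img ⁻¹' teams K φ := rfl

theorem teams_idis (φ ψ : MLI Φ) : teams K (idis φ ψ) = teams K φ ∪ teams K ψ := rfl

theorem Mset_eq_setOf_maximal (φ : MLI Φ) : Mset K φ = {T | Maximal (· ∈ teams K φ) T} := by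
  ext T
  simp only [Mset, teams, Set.mem_ofPred_eq, maximal_iff, eq_comm]

end MLI

theorem two_pow_add_two_pow_le (m n : ℕ) : 2 ^ m + 2 ^ n ≤ 2 ^ (m + n + 1) := by
  calc 2 ^ m + 2 ^ n ≤ 2 ^ (m + n) + 2 ^ (m + n) :=
        add_le_add (Nat.pow_le_pow_right two_pos (Nat.le_add_right m n))
          (Nat.pow_le_pow_right two_pos (Nat.le_add_left n m))
    _ = 2 ^ (m + n + 1) := by rw [pow_succ, mul_two]

theorem MLI.lowerGenerated_teams {Φ : Type} (K : Kripke Φ) (φ : MLI Φ) :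
    LowerGenerated (2 ^ occIdis φ) (teams K φ) := by
  induction φ with
  | atom p => exact teams_atom K p ▸ .Iic _
  | natom p => exact teams_natom K p ▸ .Iic _
  | and φ ψ ihφ ihψ =>
    rw [teams_and, occIdis, pow_add]
    exact ihφ.inter ihψ
  | or φ ψ ihφ ihψ =>
    rw [teams_or, occIdis, pow_add]
    exact ihφ.sups ihψ
  | dia φ ih =>
    rw [teams_dia K ih.isLowerSet]
    exact ih.lowerClosure_image K.pre_mono
  | box φ ih =>
    rw [teams_box]
    exact ih.preimage K.img_core_gc
  | idis φ ψ ihφ ihψ =>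
    rw [teams_idis, occIdis]
    exact (ihφ.union ihψ).mono (two_pow_add_two_pow_le _ _)

/-- For every `φ ∈ ML(⊻)(Φ)` and Kripke model `K`,
`|M(φ,K)| ≤ 2^(occ_⊻(φ))`; hence `Dim(φ) ≤ 2^(occ_⊻(φ))`. -/
theorem dim_le_two_pow_occ {Φ : Type} (φ : MLI Φ) :
    (∀ K : Kripke Φ, (MLI.Mset K φ).Finite ∧ (MLI.Mset K φ).ncard ≤ 2 ^ MLI.occIdis φ) ∧
    MLI.Dim φ ≤ 2 ^ MLI.occIdis φ := by
  have Mset_bound (K : Kripke Φ) :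
      (MLI.Mset K φ).Finite ∧ (MLI.Mset K φ).ncard ≤ 2 ^ MLI.occIdis φ := by
    rw [MLI.Mset_eq_setOf_maximal]
    exact (MLI.lowerGenerated_teams K φ).finite_maximal_and_ncard_le
  exact ⟨Mset_bound, Nat.sInf_le Mset_bound⟩

end MDLTeam
end
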